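/- Let Θ_1, …, Θ_m be r×r generator matrices (nonnegative off-diagonal entries, zero row sums) that share a common strictly positive left null vector w (w Θ_ℓ = 0 for all ℓ, with w𝟙 = 1), let c_1, …, c_m > 0 and set N_ℓ = c_ℓ(c_ℓ I − Θ_ℓ)^{−1}. Let P̂ be an m×m stochastic matrix with stationary probability vector π̂. Then w N_ℓ = w for every ℓ, the row vector π̂ ⊗ w is a stationary probability vector of the stochastic matrix N(P̂ ⊗ I_r), where N is block-diagonal with blocks N_1,…,N_m, and (π̂ ⊗ w)(I − N) = 0; consequently the lower-bound correction term (π̂ ⊗ w)(I − N) log v̄ vanishes for any choice of the vector log v̄. -/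

import Mathlib

open Matrix
open scoped Kronecker

/-- Block-diagonal matrix with `m` diagonal blocks of size `r × r`. -/
def blockDiag {m r : ℕ} (M : Fin m → Matrix (Fin r) (Fin r) ℝ) :
    Matrix (Fin m × Fin r) (Fin m × Fin r) ℝ :=
  Matrix.of fun p q => if p.1 = q.1 then M p.1 p.2 q.2 else 0

theorem aux_det {r : ℕ} (T : Matrix (Fin r) (Fin r) ℝ)
    (hoff : ∀ i j, i ≠ j → 0 ≤ T i j) (hrow : ∀ i, ∑ j, T i j = 0) (c : ℝ) (hc : 0 < c) :
    (c • (1 : Matrix (Fin r) (Fin r) ℝ) - T).det ≠ 0 := by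
  apply det_ne_zero_of_sum_row_lt_diag
  intro k
  have h1 : ∑ j ∈ Finset.univ.erase k, ‖(c • (1 : Matrix (Fin r) (Fin r) ℝ) - T) k j‖
      = ∑ j ∈ Finset.univ.erase k, T k j := by
    apply Finset.sum_congr rfl
    intro j hj
    have hkj : k ≠ j := (Finset.ne_of_mem_erase hj).symm
    simp [Matrix.one_apply, hkj, abs_of_nonneg (hoff k j hkj)]
  have h2 := Finset.add_sum_erase Finset.univ (fun j => T k j) (Finset.mem_univ k)
  simp only [hrow k] at h2
  rw [h1]
  have h3 : (c • (1 : Matrix (Fin r) (Fin r) ℝ) - T) k k = c - T k k := by simp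
  rw [h3, Real.norm_eq_abs]
  refine lt_of_lt_of_le ?_ (le_abs_self _)
  linarith

theorem aux_w {r : ℕ} (T : Matrix (Fin r) (Fin r) ℝ)
    (hoff : ∀ i j, i ≠ j → 0 ≤ T i j) (hrow : ∀ i, ∑ j, T i j = 0) (c : ℝ) (hc : 0 < c)
    (w : Fin r → ℝ) (hw : w ᵥ* T = 0) :
    w ᵥ* (c • (c • (1 : Matrix (Fin r) (Fin r) ℝ) - T)⁻¹) = w := by
  have hd := aux_det T hoff hrow c hc
  have h1 : w ᵥ* (c • (1 : Matrix (Fin r) (Fin r) ℝ) - T) = c • w := by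
    rw [Matrix.vecMul_sub, hw, Matrix.vecMul_smul, Matrix.vecMul_one, sub_zero]
  rw [Matrix.vecMul_smul, ← Matrix.smul_vecMul, ← h1, Matrix.vecMul_vecMul,
    Matrix.mul_nonsing_inv _ (isUnit_iff_ne_zero.mpr hd), Matrix.vecMul_one]

theorem aux_block {m r : ℕ} (M : Fin m → Matrix (Fin r) (Fin r) ℝ) (p : Fin m → ℝ)
    (w : Fin r → ℝ) (h : ∀ l, w ᵥ* M l = w) :
    (fun q : Fin m × Fin r => p q.1 * w q.2) ᵥ* (_root_.blockDiag M)
      = fun q : Fin m × Fin r => p q.1 * w q.2 := by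
  ext ⟨a, b⟩
  have hb := congrFun (h a) b
  simp only [Matrix.vecMul, dotProduct] at hb
  simp only [Matrix.vecMul, dotProduct, _root_.blockDiag, Matrix.of_apply, Fintype.sum_prod_type]
  rw [Finset.sum_eq_single a]
  · simp only [if_true, mul_assoc, ← Finset.mul_sum, hb]
  · intro x _ hx
    simp [hx]
  · simp

theorem aux_kron {m r : ℕ} (P : Matrix (Fin m) (Fin m) ℝ) (p : Fin m → ℝ)
    (w : Fin r → ℝ) (h : p ᵥ* P = p) :
    (fun q : Fin m × Fin r => p q.1 * w q.2) ᵥ* (P ⊗ₖ (1 : Matrix (Fin r) (Fin r) ℝ))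
      = fun q : Fin m × Fin r => p q.1 * w q.2 := by
  ext ⟨a, b⟩
  have ha := congrFun h a
  simp only [Matrix.vecMul, dotProduct] at ha
  simp only [Matrix.vecMul, dotProduct, Matrix.kroneckerMap_apply, Fintype.sum_prod_type,
    Matrix.one_apply, mul_ite, mul_one, mul_zero, Finset.sum_ite_eq', Finset.mem_univ, if_true]
  conv_rhs => rw [← ha, Finset.sum_mul]
  exact Finset.sum_congr rfl fun x _ => by ring

/-- if the generator matrices `Θ_ℓ` share a common strictly positive left
null vector `w` (with `w 𝟙 = 1`) and `N_ℓ = c_ℓ (c_ℓ I − Θ_ℓ)⁻¹`, then `w N_ℓ = w` for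
every `ℓ`; for any stochastic `P̂` with stationary probability vector `π̂`, the row vector
`π̂ ⊗ w` is a stationary probability vector of `N (P̂ ⊗ I_r)` and
`(π̂ ⊗ w)(I − N) = 0`, so the lower-bound correction `(π̂ ⊗ w)(I − N) log v̄` vanishes. -/
theorem common_left_null_vector_lower_bound_tight {m r : ℕ}
    (Th : Fin m → Matrix (Fin r) (Fin r) ℝ)
    (hoff : ∀ ℓ i j, i ≠ j → 0 ≤ Th ℓ i j) (hrow : ∀ ℓ i, ∑ j, Th ℓ i j = 0)
    (w : Fin r → ℝ) (hw : ∀ i, 0 < w i) (hwnull : ∀ ℓ, w ᵥ* Th ℓ = 0)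
    (hwsum : ∑ i, w i = 1)
    (c : Fin m → ℝ) (hc : ∀ ℓ, 0 < c ℓ)
    (Phat : Matrix (Fin m) (Fin m) ℝ)
    (hP0 : ∀ ℓ ℓ', 0 ≤ Phat ℓ ℓ') (hP1 : ∀ ℓ, ∑ ℓ', Phat ℓ ℓ' = 1)
    (pihat : Fin m → ℝ) (hpi0 : ∀ ℓ, 0 ≤ pihat ℓ) (hpi1 : ∑ ℓ, pihat ℓ = 1)
    (hpi_stat : pihat ᵥ* Phat = pihat) :
    (∀ ℓ, w ᵥ* (c ℓ • (c ℓ • (1 : Matrix (Fin r) (Fin r) ℝ) - Th ℓ)⁻¹) = w) ∧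
    (∀ p : Fin m × Fin r, 0 ≤ pihat p.1 * w p.2) ∧
    (∑ p : Fin m × Fin r, pihat p.1 * w p.2 = 1) ∧
    ((fun p : Fin m × Fin r => pihat p.1 * w p.2) ᵥ*
        (blockDiag (fun ℓ => c ℓ • (c ℓ • (1 : Matrix (Fin r) (Fin r) ℝ) - Th ℓ)⁻¹)
          * (Phat ⊗ₖ (1 : Matrix (Fin r) (Fin r) ℝ)))
      = fun p : Fin m × Fin r => pihat p.1 * w p.2) ∧
    ((fun p : Fin m × Fin r => pihat p.1 * w p.2) ᵥ*
        ((1 : Matrix (Fin m × Fin r) (Fin m × Fin r) ℝ)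
          - blockDiag (fun ℓ => c ℓ • (c ℓ • (1 : Matrix (Fin r) (Fin r) ℝ) - Th ℓ)⁻¹))
      = 0) ∧
    (∀ lv : Fin m × Fin r → ℝ,
      ∑ p : Fin m × Fin r,
        ((fun q : Fin m × Fin r => pihat q.1 * w q.2) ᵥ*
          ((1 : Matrix (Fin m × Fin r) (Fin m × Fin r) ℝ)
            - blockDiag (fun ℓ => c ℓ • (c ℓ • (1 : Matrix (Fin r) (Fin r) ℝ) - Th ℓ)⁻¹))) p
        * lv p = 0) := by
  have hN : ∀ ℓ, w ᵥ* (c ℓ • (c ℓ • (1 : Matrix (Fin r) (Fin r) ℝ) - Th ℓ)⁻¹) = w :=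
    fun ℓ => aux_w (Th ℓ) (hoff ℓ) (hrow ℓ) (c ℓ) (hc ℓ) w (hwnull ℓ)
  have hB := aux_block _ pihat w hN
  have hZ : (fun p : Fin m × Fin r => pihat p.1 * w p.2) ᵥ*
        ((1 : Matrix (Fin m × Fin r) (Fin m × Fin r) ℝ)
          - _root_.blockDiag (fun ℓ => c ℓ • (c ℓ • (1 : Matrix (Fin r) (Fin r) ℝ) - Th ℓ)⁻¹))
      = 0 := by
    rw [Matrix.vecMul_sub, Matrix.vecMul_one, hB, sub_self]
  refine ⟨hN, fun p => mul_nonneg (hpi0 _) (hw _).le, ?_, ?_, hZ, ?_⟩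
  · simp only [Fintype.sum_prod_type, ← Finset.mul_sum, hwsum, mul_one, hpi1]
  · rw [← Matrix.vecMul_vecMul, hB, aux_kron Phat pihat w hpi_stat]
  · intro lv
    rw [hZ]
    simp
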